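/- Let d ≥ 1 be an integer, 1 < p < q < d, R ∈ (0,∞), and set μ = q/p. Let b : B_R → [0,∞) be measurable with ‖b‖_{E_{q,1}(B_R)} < ∞. Then there are constants N = N(d,p,μ) such that for every function u that is twice continuously differentiable on B̄_R: ‖b·|Du|‖_{E_{p,μ}(B_R)} ≤ N ‖b‖_{E_{q,1}(B_R)} ( ‖D²u‖_{E_{p,μ}(B_R)} + R^{−1} ‖Du‖_{E_{p,μ}(B_R)} ) and ‖b·|Du|‖_{E_{p,μ}(B_R)} ≤ N ‖b‖_{E_{q,1}(B_R)} ( ‖D²u‖_{E_{p,μ}(B_R)} + R^{−2} ‖u‖_{E_{p,μ}(B_R)} ). -/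

import Mathlib

open MeasureTheory Metric Set Filter
open scoped ENNReal RealInnerProductSpace

noncomputable section

/-- Euclidean space `ℝ^d`. -/
abbrev E (d : ℕ) : Type := EuclideanSpace ℝ (Fin d)

/-- Frobenius norm of a `d × d` matrix. -/
def frob {d : ℕ} (m : Matrix (Fin d) (Fin d) ℝ) : ℝ :=
  Real.sqrt (∑ i, ∑ j, (m i j) ^ 2)

/-- `F` is `δ`-elliptic: `δ tr w ≤ F (m + w) - F m ≤ δ⁻¹ tr w` for symmetric `m` and
symmetric positive semidefinite `w`. -/
def Elliptic {d : ℕ} (δ : ℝ) (F : Matrix (Fin d) (Fin d) ℝ → ℝ) : Prop :=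
  ∀ m : Matrix (Fin d) (Fin d) ℝ, m.IsSymm →
    ∀ w : Matrix (Fin d) (Fin d) ℝ, w.PosSemidef →
      δ * w.trace ≤ F (m + w) - F m ∧ F (m + w) - F m ≤ δ⁻¹ * w.trace

/-- Gradient of `u : ℝ^d → ℝ` as a vector in `ℝ^d`. -/
def grad {d : ℕ} (u : E d → ℝ) (x : E d) : E d :=
  (EuclideanSpace.equiv (Fin d) ℝ).symm fun i => fderiv ℝ u x (EuclideanSpace.single i 1)

/-- Hessian matrix of `u : ℝ^d → ℝ`. -/
def hess {d : ℕ} (u : E d → ℝ) (x : E d) : Matrix (Fin d) (Fin d) ℝ :=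
  Matrix.of fun i j =>
    fderiv ℝ (fun y => fderiv ℝ u y (EuclideanSpace.single j 1)) x (EuclideanSpace.single i 1)

/-- Normalized `L_p` norm `(⨍_B |g|^p)^{1/p}` (average over `B`). -/
def nLp {d : ℕ} (p : ℝ) (B : Set (E d)) (g : E d → ℝ) : ℝ≥0∞ :=
  ((volume B)⁻¹ * ∫⁻ y in B, ENNReal.ofReal (|g y| ^ p)) ^ (1 / p)

/-- Unnormalized `L_p` norm `(∫_A |g|^p)^{1/p}`. -/
def Lpn {d : ℕ} (p : ℝ) (A : Set (E d)) (g : E d → ℝ) : ℝ≥0∞ :=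
  (∫⁻ y in A, ENNReal.ofReal (|g y| ^ p)) ^ (1 / p)

/-- Morrey norm `‖g‖_{E_{p,μ}(Ω)} = sup_{ρ>0, x∈Ω} ρ^μ (⨍_{B_ρ(x)} |g 1_Ω|^p)^{1/p}`. -/
def morrey {d : ℕ} (p μ : ℝ) (Ω : Set (E d)) (g : E d → ℝ) : ℝ≥0∞ :=
  ⨆ (ρ : ℝ) (_ : 0 < ρ) (x : E d) (_ : x ∈ Ω),
    ENNReal.ofReal (ρ ^ μ) * nLp p (ball x ρ) (Ω.indicator g)

/-- The `(θ, R₀)`-oscillation condition on `F(m, x)`. -/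
def OscCond {d : ℕ} (δ θ R₀ : ℝ) (F : Matrix (Fin d) (Fin d) ℝ → E d → ℝ) : Prop :=
  ∀ r ∈ Set.Ioc (0 : ℝ) R₀, ∀ z : E d,
    ∃ Fb : Matrix (Fin d) (Fin d) ℝ → ℝ,
      ConvexOn ℝ Set.univ Fb ∧ Elliptic δ Fb ∧ Fb 0 = 0 ∧
      ∀ m : Matrix (Fin d) (Fin d) ℝ, m.IsSymm → frob m = 1 →
        (volume (ball z r))⁻¹ *
            ∫⁻ x in ball z r,
              ⨆ (τ : ℝ) (_ : 0 < τ), ENNReal.ofReal (τ⁻¹ * |F (τ • m) x - Fb (τ • m)|)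
          ≤ ENNReal.ofReal θ

/-- The homogeneity bound `|F(ζ m, x)| ≤ ζ |F(m, x)| + K(x)` for `ζ ∈ [0,1]`. -/
def HomBound {d : ℕ} (F : Matrix (Fin d) (Fin d) ℝ → E d → ℝ) (K : E d → ℝ) : Prop :=
  ∀ ζ ∈ Set.Icc (0 : ℝ) 1, ∀ m : Matrix (Fin d) (Fin d) ℝ, m.IsSymm → ∀ x : E d,
    |F (ζ • m) x| ≤ ζ * |F m x| + K x

/-- Normalized Lebesgue measure on a ball. -/
def av {d : ℕ} (x : E d) (t : ℝ) : Measure (E d) :=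
  (volume (ball x t))⁻¹ • volume.restrict (ball x t)

/-- Centered maximal function over rational radii. -/
def mx {d : ℕ} (G : E d → ℝ≥0∞) (y : E d) : ℝ≥0∞ :=
  ⨆ t : {t : ℚ // 0 < t}, ∫⁻ z, G z ∂av y ((t : ℚ) : ℝ)

lemma vol_ball_pos {d : ℕ} (x : E d) {t : ℝ} (ht : 0 < t) : volume (ball x t) ≠ 0 :=
  (measure_ball_pos volume x ht).ne'

lemma vol_ball_top {d : ℕ} (x : E d) (t : ℝ) : volume (ball x t) ≠ ⊤ :=
  measure_ball_lt_top.ne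

lemma vol_ball_eq {d : ℕ} (x : E d) {t : ℝ} (ht : 0 < t) :
    volume (ball x t) = ENNReal.ofReal (t ^ d) * volume (ball (0 : E d) 1) := by
  rw [Measure.addHaar_ball_of_pos volume x ht]; simp

lemma vol_ball_mul {d : ℕ} (x y : E d) {c t : ℝ} (hc : 0 < c) (ht : 0 < t) :
    volume (ball x (c * t)) = ENNReal.ofReal (c ^ d) * volume (ball y t) := by
  rw [vol_ball_eq x (by positivity), vol_ball_eq y ht, mul_pow,
    ENNReal.ofReal_mul (by positivity), mul_assoc]

lemma lintegral_av {d : ℕ} (G : E d → ℝ≥0∞) (x : E d) (t : ℝ) :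
    ∫⁻ z, G z ∂av x t = (volume (ball x t))⁻¹ * ∫⁻ z in ball x t, G z := by
  simp [av, lintegral_smul_measure]

lemma vol_mul_av {d : ℕ} (G : E d → ℝ≥0∞) (x : E d) {t : ℝ} (ht : 0 < t) :
    volume (ball x t) * ∫⁻ z, G z ∂av x t = ∫⁻ z in ball x t, G z := by
  rw [lintegral_av, ← mul_assoc, ENNReal.mul_inv_cancel (vol_ball_pos x ht) (vol_ball_top x t),
    one_mul]

lemma av_prob {d : ℕ} (x : E d) {t : ℝ} (ht : 0 < t) : IsProbabilityMeasure (av x t) := by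
  constructor
  simp [av, ENNReal.inv_mul_cancel (vol_ball_pos x ht) (vol_ball_top x t)]

lemma measurable_setLIntegral_ball {d : ℕ} {G : E d → ℝ≥0∞} (hG : Measurable G) (t : ℝ) :
    Measurable fun y => ∫⁻ z in ball y t, G z := by
  have : ∀ y, ∫⁻ z in ball y t, G z
      = ∫⁻ z, ({w : E d × E d | dist w.2 w.1 < t}.indicator (fun w => G w.2)) (y, z) := by
    intro y
    rw [← lintegral_indicator measurableSet_ball]
    rfl
  simp_rw [this]
  apply Measurable.lintegral_prod_right'
  refine Measurable.indicator (hG.comp measurable_snd) ?_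
  exact measurableSet_lt (measurable_snd.dist measurable_fst) measurable_const

lemma measurable_av {d : ℕ} {G : E d → ℝ≥0∞} (hG : Measurable G) (t : ℝ) :
    Measurable fun y => ∫⁻ z, G z ∂av y t := by
  simp_rw [lintegral_av, Measure.addHaar_ball_center]
  exact (measurable_setLIntegral_ball hG t).const_mul _

lemma measurable_mx {d : ℕ} {G : E d → ℝ≥0∞} (hG : Measurable G) : Measurable (mx G) :=
  Measurable.iSup fun _ => measurable_av hG _

lemma mx_weak {d : ℕ} (hd : 1 ≤ d) (G : E d → ℝ≥0∞) {l : ℝ≥0∞} (hl : l ≠ 0) (hl' : l ≠ ⊤) :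
    l * volume {y | l < mx G y} ≤ ENNReal.ofReal (4 ^ d) * ∫⁻ z, G z := by
  by_cases hI : ∫⁻ z, G z = ⊤
  · rw [hI, ENNReal.mul_top (by simp)]; exact le_top
  set S := {y | l < mx G y} with hS
  have h1 : ∀ y ∈ S, ∃ t : ℝ, 0 < t ∧ l < ∫⁻ z, G z ∂av y t := by
    intro y hy
    obtain ⟨t, ht⟩ := lt_iSup_iff.1 (show l < mx G y from hy)
    exact ⟨_, by exact_mod_cast t.2, ht⟩
  choose! r hr0 hr using h1
  have h2 : ∀ y ∈ S, l * volume (ball y (r y)) ≤ ∫⁻ z in ball y (r y), G z := by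
    intro y hy
    rw [← vol_mul_av G y (hr0 y hy), mul_comm]
    gcongr
    exact (hr y hy).le
  set c := volume (ball (0 : E d) 1) with hc
  have hc0 : c ≠ 0 := vol_ball_pos _ one_pos
  have hct : c ≠ ⊤ := vol_ball_top _ _
  set X := ((∫⁻ z, G z) / (l * c)).toReal with hX
  have hXt : (∫⁻ z, G z) / (l * c) ≠ ⊤ := ENNReal.div_ne_top hI (mul_ne_zero hl hc0)
  have h3 : ∀ y ∈ S, r y ≤ 1 + X := by
    intro y hy
    have := (h2 y hy).trans (setLIntegral_le_lintegral _ _)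
    rw [vol_ball_eq y (hr0 y hy)] at this
    have h4 : ENNReal.ofReal (r y ^ d) ≤ (∫⁻ z, G z) / (l * c) := by
      rw [ENNReal.le_div_iff_mul_le (Or.inl (mul_ne_zero hl hc0))
        (Or.inl (ENNReal.mul_ne_top hl' hct))]
      calc _ = l * (ENNReal.ofReal (r y ^ d) * c) := by ring
        _ ≤ _ := this
    have h5 : r y ^ d ≤ X := (ENNReal.ofReal_le_iff_le_toReal hXt).1 h4
    have hX0 : 0 ≤ X := ENNReal.toReal_nonneg
    by_cases h6 : r y ≤ 1
    · linarith
    · have := le_self_pow₀ (not_le.1 h6).le (show d ≠ 0 by omega)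
      linarith
  obtain ⟨u, huS, hud, hu⟩ := Vitali.exists_disjoint_subfamily_covering_enlargement_ball
    S (fun y => y) r (1 + X) h3 4 (by norm_num)
  have huc : u.Countable := hud.countable_of_isOpen (fun _ _ => isOpen_ball)
    (fun a ha => nonempty_ball.2 (hr0 a (huS ha)))
  have h7 : S ⊆ ⋃ b ∈ u, ball b (4 * r b) := by
    intro y hy
    obtain ⟨b, hb, hb'⟩ := hu y hy
    exact mem_biUnion hb (hb' (mem_ball_self (hr0 y hy)))
  have _ := huc.to_subtype
  calc l * volume S ≤ l * ∑' b : u, volume (ball (b : E d) (4 * r b)) := by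
        gcongr
        exact (measure_mono h7).trans (measure_biUnion_le _ huc _)
    _ = ∑' b : u, ENNReal.ofReal (4 ^ d) * (l * volume (ball (b : E d) (r b))) := by
        rw [← ENNReal.tsum_mul_left]
        congr 1; ext b
        rw [vol_ball_mul (b : E d) b (by norm_num) (hr0 b (huS b.2))]
        ring
    _ ≤ ∑' b : u, ENNReal.ofReal (4 ^ d) * ∫⁻ z in ball (b : E d) (r b), G z := by
        gcongr with b
        exact h2 b (huS b.2)
    _ = ENNReal.ofReal (4 ^ d) * ∫⁻ z in ⋃ b ∈ u, ball b (r b), G z := by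
        rw [ENNReal.tsum_mul_left, lintegral_biUnion huc (fun _ _ => measurableSet_ball) hud]
    _ ≤ _ := mul_le_mul_right (setLIntegral_le_lintegral _ _) _

lemma lint_rpow_Ioo {s a : ℝ} (hs : 0 < s) (ha : 0 ≤ a) :
    ∫⁻ t in Ioo 0 a, ENNReal.ofReal (t ^ (s - 1)) = ENNReal.ofReal (a ^ s / s) := by
  have h1 : IntervalIntegrable (fun x : ℝ => x ^ (s - 1)) volume 0 a :=
    intervalIntegral.intervalIntegrable_rpow' (by linarith)
  rw [Measure.restrict_congr_set Ioo_ae_eq_Ioc, ← ofReal_integral_eq_lintegral_ofReal]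
  · rw [← intervalIntegral.integral_of_le ha, integral_rpow (Or.inl (by linarith))]
    congr 1
    simp [Real.zero_rpow hs.ne']
  · exact (intervalIntegrable_iff_integrableOn_Ioc_of_le ha).1 h1
  · filter_upwards [ae_restrict_mem measurableSet_Ioc] with t ht
    exact Real.rpow_nonneg ht.1.le _

/-- the layer cake kernel -/
def lay (s : ℝ) (a : ℝ≥0∞) : ℝ≥0∞ :=
  ∫⁻ t in Ioi (0 : ℝ), {t : ℝ | ENNReal.ofReal t < a}.indicator
    (fun t => ENNReal.ofReal (t ^ (s - 1))) t

lemma lay_fin {s a : ℝ} (hs : 0 < s) (ha : 0 ≤ a) :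
    lay s (ENNReal.ofReal a) = ENNReal.ofReal (a ^ s / s) := by
  rw [lay, ← lint_rpow_Ioo hs ha, ← lintegral_indicator measurableSet_Ioi,
    ← lintegral_indicator measurableSet_Ioo]
  congr 1; ext t
  by_cases h0 : 0 < t
  · by_cases h : t < a
    · simp [h0, h, indicator, ENNReal.ofReal_lt_ofReal_iff_of_nonneg h0.le]
    · simp [h0, h, indicator, ENNReal.ofReal_lt_ofReal_iff_of_nonneg h0.le]
  · simp [indicator, h0]

lemma lay_mono {s : ℝ} {a b : ℝ≥0∞} (h : a ≤ b) : lay s a ≤ lay s b := by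
  refine lintegral_mono fun t => indicator_le_indicator_of_subset ?_ (by simp) t
  intro t ht
  exact lt_of_lt_of_le ht h

lemma lay_eq {s : ℝ} (hs : 0 < s) (a : ℝ≥0∞) : ENNReal.ofReal s * lay s a = a ^ s := by
  have hfin : ∀ a : ℝ≥0∞, a ≠ ⊤ → ENNReal.ofReal s * lay s a = a ^ s := by
    intro a ha
    rw [← ENNReal.ofReal_toReal ha, lay_fin hs ENNReal.toReal_nonneg,
      ← ENNReal.ofReal_mul hs.le, ENNReal.ofReal_rpow_of_nonneg ENNReal.toReal_nonneg hs.le]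
    congr 1
    field_simp
  by_cases ha : a = ⊤
  · subst ha
    rw [ENNReal.top_rpow_of_pos hs, eq_top_iff]
    refine le_of_forall_lt fun c hc => ?_
    have : c = ENNReal.ofReal s * lay s (c ^ (1 / s)) := by
      rw [hfin _ (ENNReal.rpow_ne_top_of_nonneg (by positivity) hc.ne), ← ENNReal.rpow_mul,
        one_div_mul_cancel hs.ne', ENNReal.rpow_one]
    have h2 : c + 1 = ENNReal.ofReal s * lay s ((c + 1) ^ (1 / s)) := by
      rw [hfin _ (ENNReal.rpow_ne_top_of_nonneg (by positivity) (by simp [hc.ne])),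
        ← ENNReal.rpow_mul, one_div_mul_cancel hs.ne', ENNReal.rpow_one]
    refine lt_of_lt_of_le (ENNReal.lt_add_right hc.ne one_ne_zero) ?_
    rw [h2]
    gcongr
    exact lay_mono le_top
  · exact hfin a ha

lemma lint_layer {α : Type*} [MeasurableSpace α] (ν : Measure α) [SFinite ν] {f w : α → ℝ≥0∞}
    (hf : Measurable f) (hw : Measurable w) (s : ℝ) :
    ∫⁻ y, w y * lay s (f y) ∂ν = ∫⁻ t in Ioi (0 : ℝ), ENNReal.ofReal (t ^ (s - 1)) *
      ∫⁻ y in {y | ENNReal.ofReal t < f y}, w y ∂ν := by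
  have hm : MeasurableSet {z : α × ℝ | ENNReal.ofReal z.2 < f z.1} :=
    measurableSet_lt (by fun_prop) (by fun_prop)
  have hk : Measurable (fun z : α × ℝ => w z.1 * {z : α × ℝ | ENNReal.ofReal z.2 < f z.1}.indicator
      (fun z => ENNReal.ofReal (z.2 ^ (s - 1))) z) :=
    (hw.comp measurable_fst).mul (Measurable.indicator (by fun_prop) hm)
  have : ∀ y, w y * lay s (f y) = ∫⁻ t in Ioi (0 : ℝ), w y *
      {z : α × ℝ | ENNReal.ofReal z.2 < f z.1}.indicator
      (fun z => ENNReal.ofReal (z.2 ^ (s - 1))) (y, t) := by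
    intro y
    rw [lintegral_const_mul]
    · rfl
    · exact (Measurable.indicator (by fun_prop) hm).comp (measurable_prodMk_left)
  simp_rw [this]
  rw [lintegral_lintegral_swap hk.aemeasurable]
  congr 1; ext t
  rw [← lintegral_const_mul _ hw, ← lintegral_indicator (measurableSet_lt (by fun_prop) hf)]
  congr 1; ext y
  by_cases h : ENNReal.ofReal t < f y
  · simp [indicator, h, mul_comm]
  · simp [indicator, h]

/-- Hardy-Littlewood maximal theorem. -/
lemma mx_strong {d : ℕ} (hd : 1 ≤ d) {p : ℝ} (hp : 1 < p) :
    ∃ C : ℝ≥0∞, C ≠ ⊤ ∧ ∀ G : E d → ℝ≥0∞, Measurable G →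
      ∫⁻ y, mx G y ^ p ≤ C * ∫⁻ y, G y ^ p := by
  refine ⟨ENNReal.ofReal p * (2 * ENNReal.ofReal (4 ^ d)) * ((ENNReal.ofReal (p - 1))⁻¹ *
    2 ^ (p - 1)), ?_, ?_⟩
  · have : (ENNReal.ofReal (p - 1))⁻¹ ≠ ⊤ := by simp [hp]
    have h2 : (2 : ℝ≥0∞) ^ (p - 1) ≠ ⊤ := ENNReal.rpow_ne_top_of_nonneg (by linarith) (by simp)
    finiteness
  intro G hG
  have hp0 : 0 < p := by linarith
  have key : ∀ t : ℝ, 0 < t → volume {y | ENNReal.ofReal t < mx G y} ≤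
      (2 * ENNReal.ofReal (4 ^ d)) * (ENNReal.ofReal t⁻¹ *
        ∫⁻ y in {y | ENNReal.ofReal t < 2 * G y}, G y) := by
    intro t ht
    set A := {y | ENNReal.ofReal t < 2 * G y} with hA
    have hAm : MeasurableSet A := measurableSet_lt measurable_const (hG.const_mul _)
    have ht2 : (0 : ℝ) < t / 2 := by linarith
    have h2t : ENNReal.ofReal t = ENNReal.ofReal (t / 2) + ENNReal.ofReal (t / 2) := by
      rw [← ENNReal.ofReal_add ht2.le ht2.le]; congr 1; ring
    have hpt : ∀ z, G z ≤ A.indicator G z + ENNReal.ofReal (t / 2) := by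
      intro z
      by_cases hz : z ∈ A
      · simp [hz]
      · simp only [hz, not_false_eq_true, indicator_of_notMem, zero_add]
        have : 2 * G z ≤ ENNReal.ofReal t := not_lt.1 hz
        have h3 : ENNReal.ofReal t = 2 * ENNReal.ofReal (t / 2) := by rw [h2t]; ring
        rw [h3] at this
        exact (ENNReal.mul_le_mul_iff_right (by simp) (by simp)).1 this
    have hmx : ∀ y, mx G y ≤ mx (A.indicator G) y + ENNReal.ofReal (t / 2) := by
      intro y
      refine iSup_le fun s => ?_
      have := av_prob y (show (0 : ℝ) < ((s : ℚ) : ℝ) by exact_mod_cast s.2)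
      calc _ ≤ ∫⁻ z, (A.indicator G z + ENNReal.ofReal (t / 2)) ∂av y ((s : ℚ) : ℝ) :=
            lintegral_mono hpt
        _ = ∫⁻ z, A.indicator G z ∂av y ((s : ℚ) : ℝ) + ENNReal.ofReal (t / 2) := by
            rw [lintegral_add_right _ measurable_const]; simp
        _ ≤ _ := by
            gcongr
            exact le_iSup (fun s : {t : ℚ // 0 < t} =>
              ∫⁻ z, A.indicator G z ∂av y ((s : ℚ) : ℝ)) s
    have hsub : {y | ENNReal.ofReal t < mx G y} ⊆
        {y | ENNReal.ofReal (t / 2) < mx (A.indicator G) y} := by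
      intro y hy
      have h4 : ENNReal.ofReal (t / 2) + ENNReal.ofReal (t / 2) <
        mx (A.indicator G) y + ENNReal.ofReal (t / 2) := by
        rw [← h2t]; exact lt_of_lt_of_le hy (hmx y)
      exact lt_of_add_lt_add_right h4
    have hw := mx_weak hd (A.indicator G) (l := ENNReal.ofReal (t / 2)) (by simpa using ht2)
      (by simp)
    rw [lintegral_indicator hAm] at hw
    calc _ ≤ volume {y | ENNReal.ofReal (t / 2) < mx (A.indicator G) y} := measure_mono hsub
      _ = ENNReal.ofReal (2 * t⁻¹) * (ENNReal.ofReal (t / 2) *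
          volume {y | ENNReal.ofReal (t / 2) < mx (A.indicator G) y}) := by
          rw [← mul_assoc, ← ENNReal.ofReal_mul (by positivity)]
          have : 2 * t⁻¹ * (t / 2) = 1 := by field_simp
          simp [this]
      _ ≤ ENNReal.ofReal (2 * t⁻¹) * (ENNReal.ofReal (4 ^ d) * ∫⁻ z in A, G z) := by gcongr
      _ = _ := by
          rw [ENNReal.ofReal_mul (by norm_num)]
          simp only [ENNReal.ofReal_ofNat]
          ring
  have hmm := measurable_mx hG
  calc ∫⁻ y, mx G y ^ p = ∫⁻ y, ENNReal.ofReal p * lay p (mx G y) := by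
        simp_rw [lay_eq hp0]
    _ = ENNReal.ofReal p * ∫⁻ t in Ioi (0 : ℝ), ENNReal.ofReal (t ^ (p - 1)) *
          volume {y | ENNReal.ofReal t < mx G y} := by
        have := lint_layer (volume : Measure (E d)) hmm
          (w := fun _ => ENNReal.ofReal p) measurable_const p
        rw [this, ← lintegral_const_mul' _ _ (by simp)]
        congr 1; ext t
        simp
        ring
    _ ≤ ENNReal.ofReal p * ∫⁻ t in Ioi (0 : ℝ), (2 * ENNReal.ofReal (4 ^ d)) *
          (ENNReal.ofReal (t ^ ((p - 1) - 1)) *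
            ∫⁻ y in {y | ENNReal.ofReal t < 2 * G y}, G y) := by
        refine mul_le_mul_right ?_ _
        refine setLIntegral_mono' measurableSet_Ioi fun t ht => ?_
        have ht0 : (0 : ℝ) < t := ht
        calc _ ≤ ENNReal.ofReal (t ^ (p - 1)) * ((2 * ENNReal.ofReal (4 ^ d)) *
              (ENNReal.ofReal t⁻¹ * ∫⁻ y in {y | ENNReal.ofReal t < 2 * G y}, G y)) := by
              gcongr; exact key t ht0
          _ = (2 * ENNReal.ofReal (4 ^ d)) * ((ENNReal.ofReal (t ^ (p - 1)) *
              ENNReal.ofReal t⁻¹) * ∫⁻ y in {y | ENNReal.ofReal t < 2 * G y}, G y) := by ring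
          _ = _ := by
              rw [← ENNReal.ofReal_mul (by positivity), Real.rpow_sub_one ht0.ne' (p - 1)]
              rfl
    _ = ENNReal.ofReal p * ((2 * ENNReal.ofReal (4 ^ d)) *
          ∫⁻ y, G y * lay (p - 1) (2 * G y)) := by
        rw [lint_layer volume (hG.const_mul 2) hG (p - 1), lintegral_const_mul' _ _ (by finiteness)]
    _ = ENNReal.ofReal p * ((2 * ENNReal.ofReal (4 ^ d)) *
          ∫⁻ y, ((ENNReal.ofReal (p - 1))⁻¹ * 2 ^ (p - 1)) * G y ^ p) := by
        congr 3; ext y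
        have h1 := lay_eq (show 0 < p - 1 by linarith) (2 * G y)
        have h2 : lay (p - 1) (2 * G y) = (ENNReal.ofReal (p - 1))⁻¹ * (2 * G y) ^ (p - 1) := by
          rw [← h1, ← mul_assoc, ENNReal.inv_mul_cancel (by simpa using hp) (by simp), one_mul]
        rw [h2, ENNReal.mul_rpow_of_nonneg _ _ (by linarith)]
        have h3 : G y ^ p = G y * G y ^ (p - 1) := by
          have := ENNReal.rpow_add_of_nonneg (x := G y) 1 (p - 1) (by norm_num) (by linarith)
          rw [← add_sub_assoc, add_sub_cancel_left, ENNReal.rpow_one] at this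
          exact this
        rw [h3]; ring
    _ = _ := by
        rw [lintegral_const_mul _ (hG.pow_const p)]
        ring

lemma jensen_prob {α : Type*} [MeasurableSpace α] (ν : Measure α) [IsProbabilityMeasure ν]
    {p : ℝ} (hp : 1 < p) {f : α → ℝ≥0∞} (hf : AEMeasurable f ν) :
    ∫⁻ z, f z ∂ν ≤ (∫⁻ z, f z ^ p ∂ν) ^ (1 / p) := by
  have := ENNReal.lintegral_mul_le_Lp_mul_Lq ν (Real.HolderConjugate.conjExponent hp) hf
    (g := fun _ => 1) aemeasurable_const
  simpa using this

lemma av_le_mx {d : ℕ} (G : E d → ℝ≥0∞) (y : E d) {t : ℝ} (ht : 0 < t) :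
    ∫⁻ z, G z ∂av y t ≤ ENNReal.ofReal (2 ^ d) * mx G y := by
  obtain ⟨s, hs1, hs2⟩ := exists_rat_btwn (show t < 2 * t by linarith)
  have hs0 : (0 : ℝ) < s := ht.trans hs1
  have h1 : ∫⁻ z, G z ∂av y s ≤ mx G y :=
    le_iSup (fun s : {t : ℚ // 0 < t} => ∫⁻ z, G z ∂av y ((s : ℚ) : ℝ)) ⟨s, by exact_mod_cast hs0⟩
  refine le_trans ?_ (mul_le_mul_right h1 _)
  have hv := vol_ball_pos y ht
  have hv' := vol_ball_top y t
  rw [← ENNReal.mul_le_mul_iff_right hv hv', vol_mul_av G y ht]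
  calc _ ≤ ∫⁻ z in ball y s, G z := lintegral_mono_set (ball_subset_ball hs1.le)
    _ = volume (ball y s) * ∫⁻ z, G z ∂av y s := (vol_mul_av G y hs0).symm
    _ ≤ volume (ball y (2 * t)) * ∫⁻ z, G z ∂av y s := by
        gcongr
    _ = _ := by rw [vol_ball_mul y y (by norm_num) ht]; ring

lemma morrey_conv {μ ρ : ℝ} (hρ : 0 < ρ) {X K : ℝ≥0∞} (h : ENNReal.ofReal (ρ ^ μ) * X ≤ K) :
    X ≤ ENNReal.ofReal (ρ ^ (-μ)) * K := by
  calc X = ENNReal.ofReal (ρ ^ (-μ)) * (ENNReal.ofReal (ρ ^ μ) * X) := by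
        rw [← mul_assoc, ← ENNReal.ofReal_mul (by positivity), ← Real.rpow_add hρ]; simp
    _ ≤ _ := by gcongr

lemma hedberg {μ T : ℝ} (hμ : 1 < μ) (hT : 0 < T) {m K : ℝ≥0∞} (hK : K ≠ ⊤) {H : ℝ → ℝ≥0∞}
    (h1 : ∀ t, 0 < t → H t ≤ m) (h2 : ∀ t, 0 < t → H t ≤ ENNReal.ofReal (t ^ (-μ)) * K) :
    ENNReal.ofReal T * ∫⁻ s in Ioo (0 : ℝ) 1, H (T * s) ≤
      ENNReal.ofReal (μ / (μ - 1)) * (m ^ (1 - 1 / μ) * K ^ (1 / μ)) := by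
  have hμ0 : 0 < μ := by linarith
  have hμ1 : 0 < μ - 1 := by linarith
  have hc : 0 < 1 - 1 / μ := by
    rw [sub_pos, div_lt_one hμ0]; exact hμ
  have hz : (∀ t, 0 < t → H t = 0) → ENNReal.ofReal T * ∫⁻ s in Ioo (0 : ℝ) 1, H (T * s) ≤
      ENNReal.ofReal (μ / (μ - 1)) * (m ^ (1 - 1 / μ) * K ^ (1 / μ)) := by
    intro h
    rw [setLIntegral_congr_fun (g := fun _ => 0) measurableSet_Ioo
      (fun s hs => h _ (mul_pos hT hs.1))]
    simp
  by_cases hK0 : K = 0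
  · exact hz fun t ht => by simpa [hK0] using h2 t ht
  by_cases hm0 : m = 0
  · exact hz fun t ht => by simpa [hm0] using h1 t ht
  by_cases hmt : m = ⊤
  · have : K ^ (1 / μ) ≠ 0 := by
      rw [Ne, ENNReal.rpow_eq_zero_iff]; push Not
      exact ⟨fun h => absurd h hK0, fun h => absurd h hK⟩
    rw [hmt, ENNReal.top_rpow_of_pos hc, ENNReal.top_mul this, ENNReal.mul_top]
    · exact le_top
    · simp; positivity
  have hm' : 0 < m.toReal := ENNReal.toReal_pos hm0 hmt
  have hk' : 0 < K.toReal := ENNReal.toReal_pos hK0 hK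
  rw [← ENNReal.ofReal_toReal hmt, ← ENNReal.ofReal_toReal hK]
  have h1' : ∀ t, 0 < t → H t ≤ ENNReal.ofReal m.toReal := by
    rw [ENNReal.ofReal_toReal hmt]; exact h1
  have h2' : ∀ t, 0 < t → H t ≤ ENNReal.ofReal (t ^ (-μ)) * ENNReal.ofReal K.toReal := by
    rw [ENNReal.ofReal_toReal hK]; exact h2
  generalize m.toReal = a at *
  generalize K.toReal = k at *
  set s0 := (k / a) ^ (1 / μ) with hs0
  have hs0p : 0 < s0 := by positivity
  have hs0μ : s0 ^ μ = k / a := by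
    rw [hs0, ← Real.rpow_mul (by positivity), one_div_mul_cancel hμ0.ne', Real.rpow_one]
  set e := s0 / T with he
  have hep : 0 < e := by positivity
  have hsplit : ∫⁻ s in Ioo (0 : ℝ) 1, H (T * s) ≤
      (∫⁻ s in Ioc 0 e, ENNReal.ofReal a) +
      ∫⁻ s in Ioi e, ENNReal.ofReal ((T ^ (-μ) * k) * s ^ (-μ)) := by
    calc _ ≤ ∫⁻ s in Ioc 0 e ∪ Ioi e, H (T * s) := by
          refine lintegral_mono_set fun s hs => ?_
          rw [Ioc_union_Ioi_eq_Ioi hep.le]; exact hs.1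
      _ ≤ (∫⁻ s in Ioc 0 e, H (T * s)) + ∫⁻ s in Ioi e, H (T * s) := lintegral_union_le _ _ _
      _ ≤ _ := by
          refine add_le_add ?_ ?_
          · exact setLIntegral_mono' measurableSet_Ioc fun s hs => h1' _ (mul_pos hT hs.1)
          · refine setLIntegral_mono' measurableSet_Ioi fun s hs => ?_
            have hs' : 0 < s := hep.trans hs
            refine (h2' _ (mul_pos hT hs')).trans_eq ?_
            rw [← ENNReal.ofReal_mul (by positivity), Real.mul_rpow hT.le hs'.le]
            congr 1; ring
  have hint : ∫⁻ s in Ioi e, ENNReal.ofReal ((T ^ (-μ) * k) * s ^ (-μ)) =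
      ENNReal.ofReal ((T ^ (-μ) * k) * (e ^ (1 - μ) / (μ - 1))) := by
    rw [← ofReal_integral_eq_lintegral_ofReal]
    · rw [integral_const_mul, integral_Ioi_rpow_of_lt (by linarith) hep]
      congr 2
      rw [show -μ + 1 = -(μ - 1) by ring, show 1 - μ = -(μ - 1) by ring]
      rw [neg_div_neg_eq]
    · exact (integrableOn_Ioi_rpow_of_lt (by linarith) hep).const_mul _
    · filter_upwards [ae_restrict_mem measurableSet_Ioi] with s hs
      have hs' : 0 < s := hep.trans hs
      positivity
  rw [hint] at hsplit
  have hc1 : ∫⁻ s in Ioc 0 e, ENNReal.ofReal a = ENNReal.ofReal (a * e) := by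
    simp [ENNReal.ofReal_mul, hm'.le]
  rw [hc1, ← ENNReal.ofReal_add (by positivity) (by positivity)] at hsplit
  refine (mul_le_mul_right hsplit _).trans_eq ?_
  rw [ENNReal.ofReal_rpow_of_pos hm', ENNReal.ofReal_rpow_of_pos hk',
    ← ENNReal.ofReal_mul (by positivity), ← ENNReal.ofReal_mul (by positivity),
    ← ENNReal.ofReal_mul (by positivity)]
  congr 1
  have e1 : T ^ (-μ) * k * e ^ (1 - μ) = a * e := by
    have : k = a * s0 ^ μ := by rw [hs0μ]; field_simp
    rw [this, he, Real.rpow_sub (by positivity), Real.rpow_one, Real.div_rpow hs0p.le hT.le,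
      Real.rpow_neg hT.le]
    have := Real.rpow_pos_of_pos hT μ
    have := Real.rpow_pos_of_pos hs0p μ
    field_simp
  have e2 : a * s0 = a ^ (1 - 1 / μ) * k ^ (1 / μ) := by
    rw [hs0, Real.div_rpow hk'.le hm'.le, Real.rpow_sub hm', Real.rpow_one]
    ring
  rw [← e2]
  have : T ^ (-μ) * k * (e ^ (1 - μ) / (μ - 1)) = a * e / (μ - 1) := by
    rw [← e1]; ring
  rw [this, he]
  field_simp
  ring

/-- Morrey bound for the maximal function. -/
lemma mx_morrey {d : ℕ} (hd : 1 ≤ d) {p μ : ℝ} (hp : 1 < p) (hμ : 0 < μ) :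
    ∃ C : ℝ≥0∞, C ≠ ⊤ ∧ ∀ (Ω : Set (E d)) (G : E d → ℝ≥0∞) (K : ℝ≥0∞), Measurable G →
      (∀ x ∈ Ω, ∀ ρ, 0 < ρ → (∫⁻ z, G z ^ p ∂av x ρ) ^ (1 / p) ≤ ENNReal.ofReal (ρ ^ (-μ)) * K) →
      ∀ x ∈ Ω, ∀ ρ, 0 < ρ → ∫⁻ y, Ω.indicator (fun y => mx G y ^ p) y ∂av x ρ ≤
        C * (ENNReal.ofReal (ρ ^ (-μ)) * K) ^ p := by
  obtain ⟨C, hC, hmx⟩ := mx_strong hd hp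
  have hp0 : 0 < p := by linarith
  refine ⟨2 ^ (p - 1) * (C * ENNReal.ofReal (2 ^ d) + 1), ?_, ?_⟩
  · have h2 : (2 : ℝ≥0∞) ^ (p - 1) ≠ ⊤ := ENNReal.rpow_ne_top_of_nonneg (by linarith) (by simp)
    finiteness
  intro Ω G K hG hK x hx ρ hρ
  have hKp : ∀ x ∈ Ω, ∀ ρ, 0 < ρ →
      ∫⁻ z, G z ^ p ∂av x ρ ≤ (ENNReal.ofReal (ρ ^ (-μ)) * K) ^ p := by
    intro x hx ρ hρ
    have := ENNReal.rpow_le_rpow (hK x hx ρ hρ) hp0.le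
    rwa [← ENNReal.rpow_mul, one_div_mul_cancel hp0.ne', ENNReal.rpow_one] at this
  set G1 := (ball x (2 * ρ)).indicator G with hG1
  have hG1m : Measurable G1 := hG.indicator measurableSet_ball
  set L := ENNReal.ofReal (ρ ^ (-μ)) * K with hL
  have hpt : ∀ y ∈ ball x ρ, y ∈ Ω → mx G y ≤ mx G1 y + L := by
    intro y hy hyΩ
    refine iSup_le fun s => ?_
    have hs : (0 : ℝ) < ((s : ℚ) : ℝ) := by exact_mod_cast s.2
    by_cases hsρ : ((s : ℚ) : ℝ) ≤ ρ
    · refine le_trans ?_ (le_add_right (le_iSup (fun s : {t : ℚ // 0 < t} =>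
              ∫⁻ z, G1 z ∂av y ((s : ℚ) : ℝ)) s))
      rw [lintegral_av, lintegral_av]
      refine mul_le_mul_right ?_ _
      refine setLIntegral_mono' measurableSet_ball fun z hz => ?_
      have : z ∈ ball x (2 * ρ) := by
        have h1 := mem_ball.1 hz
        have h2 := mem_ball.1 hy
        have := dist_triangle z y x
        rw [mem_ball]; linarith
      simp [hG1, this]
    · have hρs := (not_le.1 hsρ).le
      have := av_prob y hs
      refine le_trans ?_ le_add_self
      refine (jensen_prob _ hp hG.aemeasurable).trans ((hK y hyΩ _ hs).trans ?_)
      rw [hL]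
      gcongr ENNReal.ofReal ?_ * _
      exact Real.rpow_le_rpow_of_nonpos hρ hρs (by linarith)
  have hv := vol_ball_pos x hρ
  have hv' := vol_ball_top x ρ
  have hm1 : Measurable (mx G1) := measurable_mx hG1m
  rw [← ENNReal.mul_le_mul_iff_right hv hv', vol_mul_av _ x hρ]
  calc _ ≤ ∫⁻ y in ball x ρ, 2 ^ (p - 1) * (mx G1 y ^ p + L ^ p) := by
        refine setLIntegral_mono' measurableSet_ball fun y hy => ?_
        by_cases hyΩ : y ∈ Ω
        · rw [indicator_of_mem hyΩ]
          exact (ENNReal.rpow_le_rpow (hpt y hy hyΩ) hp0.le).trans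
            (ENNReal.rpow_add_le_mul_rpow_add_rpow _ _ hp.le)
        · rw [indicator_of_notMem hyΩ]; exact zero_le
    _ = 2 ^ (p - 1) * ((∫⁻ y in ball x ρ, mx G1 y ^ p) + volume (ball x ρ) * L ^ p) := by
        rw [lintegral_const_mul _ ((hm1.pow_const p).add_const _),
          lintegral_add_right _ measurable_const]
        simp [mul_comm]
    _ ≤ 2 ^ (p - 1) * (C * (ENNReal.ofReal (2 ^ d) * volume (ball x ρ) * L ^ p)
          + volume (ball x ρ) * L ^ p) := by
        gcongr
        refine (setLIntegral_le_lintegral _ _).trans ((hmx G1 hG1m).trans ?_)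
        gcongr
        have : ∀ y, G1 y ^ p = (ball x (2 * ρ)).indicator (fun y => G y ^ p) y := by
          intro y
          by_cases h : y ∈ ball x (2 * ρ)
          · rw [hG1, indicator_of_mem h, indicator_of_mem h]
          · rw [hG1, indicator_of_notMem h, indicator_of_notMem h, ENNReal.zero_rpow_of_pos hp0]
        simp_rw [this]
        rw [lintegral_indicator measurableSet_ball, ← vol_mul_av _ x (by positivity),
          vol_ball_mul x x (by norm_num) hρ]
        gcongr
        refine (hKp x hx _ (by positivity)).trans ?_
        refine ENNReal.rpow_le_rpow ?_ hp0.le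
        rw [hL]
        gcongr ENNReal.ofReal ?_ * _
        exact Real.rpow_le_rpow_of_nonpos hρ (by linarith) (by linarith)
    _ = _ := by ring

lemma const_morrey {d : ℕ} {q : ℝ} (hqd : q < d) (hq : 0 < q) (x : E d) {R ρ : ℝ} (hR : 0 < R)
    (hρ : 0 < ρ) : av x ρ (ball (0 : E d) R) ≤ ENNReal.ofReal ((R / ρ) ^ q) := by
  by_cases h : ρ ≤ R
  · have := av_prob x hρ
    refine prob_le_one.trans ?_
    rw [ENNReal.one_le_ofReal]
    exact Real.one_le_rpow ((one_le_div hρ).2 h) hq.le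
  · have h1 : R / ρ ≤ 1 := (div_le_one hρ).2 (not_le.1 h).le
    have h2 : (0 : ℝ) < R / ρ := by positivity
    have h3 : av x ρ (ball (0 : E d) R) ≤ ENNReal.ofReal ((R / ρ) ^ d) := by
      simp only [av, Measure.smul_apply, smul_eq_mul]
      have h4 : volume (ball (0 : E d) R) = ENNReal.ofReal ((R / ρ) ^ d) * volume (ball x ρ) := by
        rw [← vol_ball_mul (0 : E d) x h2 hρ]; congr 2; field_simp
      calc _ ≤ (volume (ball x ρ))⁻¹ * volume (ball (0 : E d) R) := by
            exact mul_le_mul_right (Measure.restrict_apply_le _ _) _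
        _ = ENNReal.ofReal ((R / ρ) ^ d) * ((volume (ball x ρ))⁻¹ * volume (ball x ρ)) := by
            rw [h4]; ring
        _ = _ := by rw [ENNReal.inv_mul_cancel (vol_ball_pos x hρ) (vol_ball_top x ρ), mul_one]
    refine h3.trans (ENNReal.ofReal_le_ofReal ?_)
    rw [← Real.rpow_natCast]
    exact Real.rpow_le_rpow_of_exponent_ge h2 h1 hqd.le

lemma adams {d : ℕ} (hd : 1 ≤ d) {p q r : ℝ} (hp : 1 < p) (hpq : p < q) (hqd : q < d)
    (hr : r = p * q / (q - p)) (C1 : ℝ≥0∞) (hC1 : C1 ≠ ⊤) :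
    ∃ C : ℝ≥0∞, C ≠ ⊤ ∧ ∀ (R : ℝ), 0 < R → ∀ (G F : E d → ℝ≥0∞) (K A : ℝ≥0∞), Measurable G →
      (∀ x ∈ ball (0 : E d) R, ∀ ρ, 0 < ρ →
        (∫⁻ z, G z ^ p ∂av x ρ) ^ (1 / p) ≤ ENNReal.ofReal (ρ ^ (-(q / p))) * K) →
      (∀ y, F y ≤ (ball (0 : E d) R).indicator
        (fun y => C1 * (mx G y ^ (1 - 1 / (q / p)) * K ^ (1 / (q / p))) + A) y) →
      ∀ x ∈ ball (0 : E d) R, ∀ ρ, 0 < ρ →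
        ENNReal.ofReal (ρ ^ (q / p - 1)) * (∫⁻ y, F y ^ r ∂av x ρ) ^ (1 / r) ≤
          C * K + A * ENNReal.ofReal (R ^ (q / p - 1)) := by
  have hp0 : 0 < p := by linarith
  have hq0 : 0 < q := by linarith
  have hqp : 0 < q - p := by linarith
  have hr0 : 0 < r := by rw [hr]; positivity
  have hr1 : 1 ≤ r := by
    rw [hr, le_div_iff₀ hqp]; nlinarith
  set μ := q / p with hμ
  have hμ1 : 1 < μ := (one_lt_div hp0).2 hpq
  have hμ0 : 0 < μ := by linarith
  have hc : 0 < 1 - 1 / μ := by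
    rw [sub_pos, div_lt_one hμ0]; exact hμ1
  have e1 : (1 - 1 / μ) * r = p := by rw [hr, hμ]; field_simp
  have e2 : p * (1 / r) = 1 - 1 / μ := by rw [hr, hμ]; field_simp
  have e3 : q * (1 / r) = μ - 1 := by rw [hr, hμ]; field_simp
  have e4 : -μ * (1 - 1 / μ) = -(μ - 1) := by field_simp
  obtain ⟨C, hC, H⟩ := mx_morrey hd (p := p) (μ := μ) hp hμ0
  refine ⟨C1 * C ^ (1 / r), ENNReal.mul_ne_top hC1
    (ENNReal.rpow_ne_top_of_nonneg (by positivity) hC), ?_⟩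
  intro R hR G F K A hG hGK hF x hx ρ hρ
  set Ω := ball (0 : E d) R with hΩ
  have hΩm : MeasurableSet Ω := measurableSet_ball
  have hmm := measurable_mx hG
  set c := C1 * K ^ (1 / μ) with hcdef
  set f1 : E d → ℝ≥0∞ := Ω.indicator (fun y => c * mx G y ^ (1 - 1 / μ)) with hf1
  set f2 : E d → ℝ≥0∞ := Ω.indicator (fun _ => A) with hf2
  have hf1m : Measurable f1 := ((hmm.pow_const _).const_mul c).indicator hΩm
  have hf2m : Measurable f2 := measurable_const.indicator hΩm
  have hF' : ∀ y, F y ≤ (f1 + f2) y := by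
    intro y
    refine (hF y).trans_eq ?_
    by_cases h : y ∈ Ω
    · simp only [Pi.add_apply, hf1, hf2, indicator_of_mem h, hcdef]; ring
    · simp [Pi.add_apply, hf1, hf2, indicator_of_notMem h]
  have hm := ENNReal.lintegral_Lp_add_le (μ := av x ρ) hf1m.aemeasurable hf2m.aemeasurable hr1
  have hle : (∫⁻ y, F y ^ r ∂av x ρ) ^ (1 / r) ≤ (∫⁻ y, (f1 + f2) y ^ r ∂av x ρ) ^ (1 / r) := by
    refine ENNReal.rpow_le_rpow (lintegral_mono fun y => ?_) (by positivity)
    exact ENNReal.rpow_le_rpow (hF' y) hr0.le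
  have b1 : (∫⁻ y, f1 y ^ r ∂av x ρ) ^ (1 / r) ≤
      C1 * C ^ (1 / r) * K * ENNReal.ofReal (ρ ^ (-(μ - 1))) := by
    have : ∀ y, f1 y ^ r = c ^ r * Ω.indicator (fun y => mx G y ^ p) y := by
      intro y
      by_cases h : y ∈ Ω
      · simp only [hf1, indicator_of_mem h]
        rw [ENNReal.mul_rpow_of_nonneg _ _ hr0.le, ← ENNReal.rpow_mul, e1]
      · simp [hf1, indicator_of_notMem h, hr0]
    simp_rw [this]
    rw [lintegral_const_mul _ ((hmm.pow_const p).indicator hΩm),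
      ENNReal.mul_rpow_of_nonneg _ _ (by positivity), ← ENNReal.rpow_mul,
      mul_one_div_cancel hr0.ne', ENNReal.rpow_one]
    calc _ ≤ c * (C * (ENNReal.ofReal (ρ ^ (-μ)) * K) ^ p) ^ (1 / r) := by
          gcongr
          exact H Ω G K hG hGK x hx ρ hρ
      _ = c * (C ^ (1 / r) * (ENNReal.ofReal (ρ ^ (-(μ - 1))) * K ^ (1 - 1 / μ))) := by
          rw [ENNReal.mul_rpow_of_nonneg _ _ (by positivity), ← ENNReal.rpow_mul, e2,
            ENNReal.mul_rpow_of_nonneg _ _ hc.le, ENNReal.ofReal_rpow_of_pos (by positivity),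
            ← Real.rpow_mul hρ.le, e4]
      _ = C1 * C ^ (1 / r) * (K ^ (1 / μ) * K ^ (1 - 1 / μ)) *
            ENNReal.ofReal (ρ ^ (-(μ - 1))) := by rw [hcdef]; ring
      _ = _ := by
          rw [← ENNReal.rpow_add_of_nonneg _ _ (by positivity) hc.le]; simp
  have b2 : (∫⁻ y, f2 y ^ r ∂av x ρ) ^ (1 / r) ≤
      A * ENNReal.ofReal (R ^ (μ - 1)) * ENNReal.ofReal (ρ ^ (-(μ - 1))) := by
    have : ∀ y, f2 y ^ r = Ω.indicator (fun y => A ^ r) y := by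
      intro y
      by_cases h : y ∈ Ω
      · simp only [hf2, indicator_of_mem h]
      · simp [hf2, indicator_of_notMem h, hr0]
    simp_rw [this]
    rw [lintegral_indicator_const hΩm, ENNReal.mul_rpow_of_nonneg _ _ (by positivity),
      ← ENNReal.rpow_mul, mul_one_div_cancel hr0.ne', ENNReal.rpow_one, mul_assoc]
    gcongr
    calc _ ≤ (ENNReal.ofReal ((R / ρ) ^ q)) ^ (1 / r) :=
          ENNReal.rpow_le_rpow (const_morrey hqd hq0 x hR hρ) (by positivity)
      _ = _ := by
          rw [ENNReal.ofReal_rpow_of_pos (by positivity), ← Real.rpow_mul (by positivity), e3,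
            ← ENNReal.ofReal_mul (by positivity), Real.div_rpow hR.le hρ.le, Real.rpow_neg hρ.le]
          rfl
  calc _ ≤ ENNReal.ofReal (ρ ^ (μ - 1)) * (C1 * C ^ (1 / r) * K * ENNReal.ofReal (ρ ^ (-(μ - 1)))
        + A * ENNReal.ofReal (R ^ (μ - 1)) * ENNReal.ofReal (ρ ^ (-(μ - 1)))) := by
        gcongr
        exact hle.trans (hm.trans (add_le_add b1 b2))
    _ = (C1 * C ^ (1 / r) * K + A * ENNReal.ofReal (R ^ (μ - 1))) *
        (ENNReal.ofReal (ρ ^ (μ - 1)) * ENNReal.ofReal (ρ ^ (-(μ - 1)))) := by ring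
    _ = _ := by
        rw [← ENNReal.ofReal_mul (by positivity), ← Real.rpow_add hρ]; simp

lemma ftc_enorm {F : Type*} [NormedAddCommGroup F] [NormedSpace ℝ F] [CompleteSpace F]
    {ψ ψ' : ℝ → F} (h : ∀ s ∈ Icc (0 : ℝ) 1, HasDerivAt ψ (ψ' s) s)
    (hc : ContinuousOn ψ' (Icc 0 1)) :
    ‖ψ 1 - ψ 0‖ₑ ≤ ∫⁻ s in Ioo (0 : ℝ) 1, ‖ψ' s‖ₑ := by
  have h01 : uIcc (0 : ℝ) 1 = Icc 0 1 := uIcc_of_le zero_le_one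
  have := intervalIntegral.integral_eq_sub_of_hasDerivAt (f := ψ) (f' := ψ') (a := 0) (b := 1)
    (by rw [h01]; exact h) (ContinuousOn.intervalIntegrable (by rw [h01]; exact hc))
  rw [← this, intervalIntegral.integral_of_le zero_le_one,
    Measure.restrict_congr_set Ioo_ae_eq_Ioc]
  exact enorm_integral_le_lintegral_enorm _

lemma lint_affine {d : ℕ} {h : E d → ℝ≥0∞} (hh : Measurable h) (y : E d) {s : ℝ} (hs : 0 < s) :
    ∫⁻ z, h (y + s • (z - y)) = ENNReal.ofReal ((s ^ d)⁻¹) * ∫⁻ z, h z := by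
  have h1 := lintegral_sub_right_eq_self (μ := (volume : Measure (E d)))
    (fun z => h (y + s • z)) y
  rw [h1]
  have h2 : ∫⁻ z, h (y + s • z) = ∫⁻ z, h (y + z) ∂(Measure.map (s • ·) volume) := by
    rw [lintegral_map (by fun_prop) (by fun_prop)]
  rw [h2, Measure.map_addHaar_smul volume hs.ne', lintegral_smul_measure,
    lintegral_add_left_eq_self, abs_of_nonneg (by positivity)]
  simp

lemma seg_mem {d : ℕ} {R : ℝ} {y z : E d} (hy : y ∈ ball (0 : E d) R) (hz : z ∈ ball (0 : E d) R)
    {s : ℝ} (hs : s ∈ Icc (0 : ℝ) 1) : y + s • (z - y) ∈ ball (0 : E d) R :=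
  (convex_ball (0 : E d) R).add_smul_sub_mem hy hz hs

/-- the potential-type quantity -/
def pot {d : ℕ} (R : ℝ) (G : E d → ℝ≥0∞) (y : E d) : ℝ≥0∞ :=
  ENNReal.ofReal (2 * R) * ∫⁻ s in Ioo (0 : ℝ) 1, ∫⁻ w, G w ∂av y (2 * R * s)

lemma osc_bound {d : ℕ} {F : Type*} [NormedAddCommGroup F] [NormedSpace ℝ F] [CompleteSpace F]
    {R : ℝ} (hR : 0 < R) {f : E d → F} (hf : ContDiffOn ℝ 1 f (ball (0 : E d) R))
    {G : E d → ℝ≥0∞} (hG : Measurable G)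
    (hfG : ∀ w ∈ ball (0 : E d) R, ‖fderiv ℝ f w‖ₑ ≤ G w) {y : E d}
    (hy : y ∈ ball (0 : E d) R) :
    ∫⁻ z, ‖f z - f y‖ₑ ∂av (0 : E d) R ≤ ENNReal.ofReal (2 ^ d) * pot R G y := by
  have hdf : ∀ w ∈ ball (0 : E d) R, DifferentiableAt ℝ f w := fun w hw =>
    (hf.differentiableOn one_ne_zero).differentiableAt (isOpen_ball.mem_nhds hw)
  have hcf : ContinuousOn (fderiv ℝ f) (ball (0 : E d) R) :=
    hf.continuousOn_fderiv_of_isOpen isOpen_ball le_rfl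
  have hdist : ∀ z ∈ ball (0 : E d) R, ‖z - y‖ < 2 * R := by
    intro z hz
    have h1 := mem_ball_zero_iff.1 hy
    have h2 := mem_ball_zero_iff.1 hz
    have := norm_sub_le z y
    linarith
  have step1 : ∀ z ∈ ball (0 : E d) R, ‖f z - f y‖ₑ ≤
      ∫⁻ s in Ioo (0 : ℝ) 1, ENNReal.ofReal (2 * R) * G (y + s • (z - y)) := by
    intro z hz
    have h1 : ∀ s ∈ Icc (0 : ℝ) 1, HasDerivAt (fun s : ℝ => f (y + s • (z - y)))
        (fderiv ℝ f (y + s • (z - y)) (z - y)) s := by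
      intro s hs
      have hl : HasDerivAt (fun s : ℝ => y + s • (z - y)) (z - y) s := by
        simpa using ((hasDerivAt_id s).smul_const (z - y)).const_add y
      exact (hdf _ (seg_mem hy hz hs)).hasFDerivAt.comp_hasDerivAt s hl
    have h2 : ContinuousOn (fun s : ℝ => fderiv ℝ f (y + s • (z - y)) (z - y)) (Icc 0 1) := by
      refine ContinuousOn.clm_apply (hcf.comp (by fun_prop) fun s hs => seg_mem hy hz hs)
        continuousOn_const
    have h3 := ftc_enorm h1 h2
    simp only [one_smul, zero_smul, add_zero, add_sub_cancel] at h3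
    refine h3.trans (setLIntegral_mono' measurableSet_Ioo fun s hs => ?_)
    have hm := seg_mem hy hz (Ioo_subset_Icc_self hs)
    calc _ ≤ ‖fderiv ℝ f (y + s • (z - y))‖ₑ * ‖z - y‖ₑ := ContinuousLinearMap.le_opENorm _ _
      _ ≤ G (y + s • (z - y)) * ENNReal.ofReal (2 * R) := by
          gcongr
          · exact hfG _ hm
          · rw [← ofReal_norm_eq_enorm]; exact ENNReal.ofReal_le_ofReal (hdist z hz).le
      _ = _ := mul_comm _ _
  have step2 : ∀ s ∈ Ioo (0 : ℝ) 1, ∫⁻ z in ball (0 : E d) R, G (y + s • (z - y)) ≤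
      volume (ball (0 : E d) R) * (ENNReal.ofReal (2 ^ d) * ∫⁻ w, G w ∂av y (2 * R * s)) := by
    intro s hs
    have hs0 := hs.1
    have hind : Measurable ((ball y (2 * R * s)).indicator G) := hG.indicator measurableSet_ball
    calc _ ≤ ∫⁻ z in ball (0 : E d) R, (ball y (2 * R * s)).indicator G (y + s • (z - y)) := by
          refine setLIntegral_mono' measurableSet_ball fun z hz => ?_
          rw [indicator_of_mem]
          rw [mem_ball, dist_self_add_left, norm_smul, Real.norm_of_nonneg hs0.le, mul_comm]
          gcongr
          exact hdist z hz
      _ ≤ ∫⁻ z, (ball y (2 * R * s)).indicator G (y + s • (z - y)) :=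
          setLIntegral_le_lintegral _ _
      _ = ENNReal.ofReal ((s ^ d)⁻¹) * (volume (ball y (2 * R * s)) *
            ∫⁻ w, G w ∂av y (2 * R * s)) := by
          rw [lint_affine hind y hs0, lintegral_indicator measurableSet_ball,
            vol_mul_av _ _ (by positivity)]
      _ = _ := by
          rw [show 2 * R * s = (2 * s) * R by ring, vol_ball_mul y (0 : E d) (by positivity) hR,
            mul_pow, ENNReal.ofReal_mul (by positivity)]
          have : ENNReal.ofReal ((s ^ d)⁻¹) * ENNReal.ofReal (s ^ d) = 1 := by
            rw [← ENNReal.ofReal_mul (by positivity), inv_mul_cancel₀ (by positivity)]; simp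
          calc _ = (ENNReal.ofReal ((s ^ d)⁻¹) * ENNReal.ofReal (s ^ d)) *
                (volume (ball (0 : E d) R) * (ENNReal.ofReal (2 ^ d) *
                  ∫⁻ w, G w ∂av y (2 * s * R))) := by ring
            _ = _ := by rw [this, one_mul]
  have hv := vol_ball_pos (0 : E d) hR
  have hv' := vol_ball_top (0 : E d) R
  rw [← ENNReal.mul_le_mul_iff_right hv hv', vol_mul_av _ _ hR]
  have hmeas : Measurable (fun w : E d × ℝ =>
      ENNReal.ofReal (2 * R) * G (y + w.2 • (w.1 - y))) := by
    refine (hG.comp ?_).const_mul _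
    fun_prop
  have hmeas1 : ∀ s : ℝ, Measurable fun z : E d => G (y + s • (z - y)) := fun s =>
    hG.comp (by fun_prop)
  calc _ ≤ ∫⁻ z in ball (0 : E d) R,
        ∫⁻ s in Ioo (0 : ℝ) 1, ENNReal.ofReal (2 * R) * G (y + s • (z - y)) :=
        setLIntegral_mono' measurableSet_ball step1
    _ = ∫⁻ s in Ioo (0 : ℝ) 1, ∫⁻ z in ball (0 : E d) R,
          ENNReal.ofReal (2 * R) * G (y + s • (z - y)) :=
        lintegral_lintegral_swap hmeas.aemeasurable
    _ ≤ ∫⁻ s in Ioo (0 : ℝ) 1, (ENNReal.ofReal (2 * R) * (volume (ball (0 : E d) R) *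
          ENNReal.ofReal (2 ^ d))) * ∫⁻ w, G w ∂av y (2 * R * s) := by
        refine setLIntegral_mono' measurableSet_Ioo fun s hs => ?_
        rw [lintegral_const_mul _ (hmeas1 s)]
        refine (mul_le_mul_right (step2 s hs) _).trans_eq ?_
        ring
    _ = _ := by
        rw [lintegral_const_mul' _ _ (by finiteness), pot]
        ring

lemma point1 {d : ℕ} {F : Type*} [NormedAddCommGroup F] 
    {R : ℝ} (hR : 0 < R) {f : E d → F} (hfm : Measurable fun z => ‖f z‖ₑ) (y : E d) :
    ‖f y‖ₑ ≤ ∫⁻ z, ‖f z - f y‖ₑ ∂av (0 : E d) R + ∫⁻ z, ‖f z‖ₑ ∂av (0 : E d) R := by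
  have := av_prob (0 : E d) hR
  calc ‖f y‖ₑ = ∫⁻ z, ‖f y‖ₑ ∂av (0 : E d) R := by simp
    _ ≤ ∫⁻ z, (‖f z - f y‖ₑ + ‖f z‖ₑ) ∂av (0 : E d) R := by
        refine lintegral_mono fun z => ?_
        have h : f y = -(f z - f y) + f z := by abel
        calc ‖f y‖ₑ = ‖-(f z - f y) + f z‖ₑ := by rw [← h]
          _ ≤ ‖-(f z - f y)‖ₑ + ‖f z‖ₑ := enorm_add_le _ _
          _ = _ := by rw [enorm_neg]
    _ = _ := lintegral_add_right _ hfm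

lemma ind_meas {d : ℕ} {Ω : Set (E d)} (hΩ : MeasurableSet Ω) {g : E d → ℝ≥0∞}
    (hg : ContinuousOn g Ω) : Measurable (Ω.indicator g) := by
  classical
  rw [← Set.piecewise_eq_indicator]
  exact hg.measurable_piecewise continuousOn_const hΩ

lemma point2 {d : ℕ} {R : ℝ} (hR : 0 < R) {u : E d → ℝ}
    (hu : ContDiffOn ℝ 1 u (ball (0 : E d) R)) (y : E d) :
    ‖fderiv ℝ u y‖ₑ ≤ ENNReal.ofReal (2 ^ d) *
      (∫⁻ z, ‖fderiv ℝ u z - fderiv ℝ u y‖ₑ ∂av (0 : E d) R +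
        ENNReal.ofReal (4 / R) * ∫⁻ z, ‖u z‖ₑ ∂av (0 : E d) R) := by
  set Ω := ball (0 : E d) R with hΩ
  have hΩm : MeasurableSet Ω := measurableSet_ball
  set f := fderiv ℝ u with hfdef
  have hdu : ∀ w ∈ Ω, DifferentiableAt ℝ u w := fun w hw =>
    (hu.differentiableOn one_ne_zero).differentiableAt (isOpen_ball.mem_nhds hw)
  have hcf : ContinuousOn f Ω := hu.continuousOn_fderiv_of_isOpen isOpen_ball le_rfl
  have hfm : Measurable f := measurable_fderiv ℝ u
  set φ : E d → ℝ≥0∞ := Ω.indicator fun z => ‖f z - f y‖ₑ with hφ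
  have hφm : Measurable φ := (hfm.sub_const _).enorm.indicator hΩm
  set U : E d → ℝ≥0∞ := Ω.indicator fun z => ‖u z‖ₑ with hU
  have hUm : Measurable U := by
    have h1 : ContinuousOn (fun z => ‖u z‖ₑ) Ω := continuous_enorm.comp_continuousOn hu.continuousOn
    exact ind_meas hΩm h1
  set h := R / 2 with hh
  have hh0 : 0 < h := by positivity
  set B := ENNReal.ofReal (2 ^ d) *
      (∫⁻ z, ‖f z - f y‖ₑ ∂av (0 : E d) R +
        ENNReal.ofReal (4 / R) * ∫⁻ z, ‖u z‖ₑ ∂av (0 : E d) R) with hB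
  suffices hmain : ∀ e : E d, ‖e‖ = 1 → ‖f y e‖ₑ ≤ B by
    by_cases hBt : B = ⊤
    · rw [hBt]; exact le_top
    · have : ‖f y‖ ≤ B.toReal := by
        refine ContinuousLinearMap.opNorm_le_of_unit_norm ENNReal.toReal_nonneg fun e he => ?_
        have := hmain e he
        rw [← ofReal_norm_eq_enorm] at this
        exact (ENNReal.ofReal_le_iff_le_toReal hBt).1 this
      rw [← ofReal_norm_eq_enorm]
      exact (ENNReal.ofReal_le_iff_le_toReal hBt).2 this
  intro e he
  have hmem : ∀ z ∈ ball (0 : E d) h, ∀ τ ∈ Icc (0 : ℝ) 1, z + τ • (h • e) ∈ Ω := by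
    intro z hz τ hτ
    rw [hΩ, mem_ball_zero_iff]
    have h1 := mem_ball_zero_iff.1 hz
    have h2 : ‖τ • (h • e)‖ ≤ h := by
      rw [norm_smul, norm_smul, he, Real.norm_of_nonneg hτ.1, Real.norm_of_nonneg hh0.le]
      nlinarith [hτ.2]
    have := norm_add_le z (τ • (h • e))
    linarith
  have step : ∀ z ∈ ball (0 : E d) h, ENNReal.ofReal h * ‖f y e‖ₑ ≤
      (ENNReal.ofReal h * ∫⁻ τ in Ioo (0 : ℝ) 1, φ (z + τ • (h • e))) +
        (U (z + h • e) + U z) := by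
    intro z hz
    have h1 : ∀ τ ∈ Icc (0 : ℝ) 1, HasDerivAt (fun τ : ℝ => u (z + τ • (h • e)) - τ * f y (h • e))
        ((f (z + τ • (h • e)) - f y) (h • e)) τ := by
      intro τ hτ
      have hl : HasDerivAt (fun s : ℝ => z + s • (h • e)) (h • e) τ := by
        simpa using ((hasDerivAt_id τ).smul_const (h • e)).const_add z
      have h2 := (hdu _ (hmem z hz τ hτ)).hasFDerivAt.comp_hasDerivAt τ hl
      have h3 : HasDerivAt (fun s : ℝ => s * f y (h • e)) (f y (h • e)) τ := by
        simpa using (hasDerivAt_id τ).mul_const (f y (h • e))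
      exact h2.sub h3
    have h2 : ContinuousOn (fun τ : ℝ => (f (z + τ • (h • e)) - f y) (h • e)) (Icc 0 1) := by
      refine ContinuousOn.clm_apply (ContinuousOn.sub
        (hcf.comp (by fun_prop) fun s hs => hmem z hz s hs) continuousOn_const) continuousOn_const
    have h3 := ftc_enorm h1 h2
    simp only [one_smul, zero_smul, add_zero, one_mul, zero_mul, sub_zero] at h3
    have h4 : ∫⁻ τ in Ioo (0 : ℝ) 1, ‖(f (z + τ • (h • e)) - f y) (h • e)‖ₑ ≤
        ENNReal.ofReal h * ∫⁻ τ in Ioo (0 : ℝ) 1, φ (z + τ • (h • e)) := by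
      rw [← lintegral_const_mul' _ _ (by simp)]
      refine setLIntegral_mono' measurableSet_Ioo fun τ hτ => ?_
      rw [hφ, indicator_of_mem (hmem z hz τ (Ioo_subset_Icc_self hτ))]
      refine (ContinuousLinearMap.le_opENorm _ _).trans_eq ?_
      rw [mul_comm]
      congr 1
      rw [← ofReal_norm_eq_enorm, norm_smul, he, mul_one, Real.norm_of_nonneg hh0.le]
    have h5 : ENNReal.ofReal h * ‖f y e‖ₑ = ‖f y (h • e)‖ₑ := by
      rw [map_smul, enorm_smul, Real.enorm_of_nonneg hh0.le]
    have hz1 : z + h • e ∈ Ω := by simpa using hmem z hz 1 (by simp)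
    have hz0 : z ∈ Ω := by simpa using hmem z hz 0 (by simp)
    rw [h5, hU, indicator_of_mem hz1, indicator_of_mem hz0]
    have h6 : f y (h • e) = -(u (z + h • e) - f y (h • e) - u z) + (u (z + h • e) + -u z) := by ring
    calc ‖f y (h • e)‖ₑ = ‖-(u (z + h • e) - f y (h • e) - u z) + (u (z + h • e) + -u z)‖ₑ := by
          rw [← h6]
      _ ≤ ‖-(u (z + h • e) - f y (h • e) - u z)‖ₑ + (‖u (z + h • e)‖ₑ + ‖-u z‖ₑ) :=
          (enorm_add_le _ _).trans (add_le_add_right (enorm_add_le _ _) _)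
      _ ≤ _ := by
          rw [enorm_neg, enorm_neg]
          exact add_le_add_left (h3.trans h4) _
  have hv0 := vol_ball_pos (0 : E d) hh0
  have hvt := vol_ball_top (0 : E d) h
  have hint : volume (ball (0 : E d) h) * (ENNReal.ofReal h * ‖f y e‖ₑ) ≤
      ENNReal.ofReal h * (∫⁻ z, φ z) + 2 * ∫⁻ z, U z := by
    have hmeas : Measurable (fun w : E d × ℝ => φ (w.1 + w.2 • (h • e))) :=
      hφm.comp (by fun_prop)
    calc _ = ∫⁻ z in ball (0 : E d) h, ENNReal.ofReal h * ‖f y e‖ₑ := by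
          rw [setLIntegral_const, mul_comm]
      _ ≤ ∫⁻ z in ball (0 : E d) h, ((ENNReal.ofReal h *
            ∫⁻ τ in Ioo (0 : ℝ) 1, φ (z + τ • (h • e))) + (U (z + h • e) + U z)) :=
          setLIntegral_mono' measurableSet_ball step
      _ = ENNReal.ofReal h * (∫⁻ z in ball (0 : E d) h,
            ∫⁻ τ in Ioo (0 : ℝ) 1, φ (z + τ • (h • e))) +
            ((∫⁻ z in ball (0 : E d) h, U (z + h • e)) + ∫⁻ z in ball (0 : E d) h, U z) := by
          rw [lintegral_add_right, lintegral_add_right _ hUm, lintegral_const_mul' _ _ (by simp)]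
          exact (hUm.comp (measurable_add_const _)).add hUm
      _ ≤ ENNReal.ofReal h * (∫⁻ z, φ z) + ((∫⁻ z, U z) + ∫⁻ z, U z) := by
          refine add_le_add (mul_le_mul_right ?_ _) (add_le_add ?_ ?_)
          · rw [lintegral_lintegral_swap hmeas.aemeasurable]
            calc _ ≤ ∫⁻ τ in Ioo (0 : ℝ) 1, ∫⁻ z, φ z := by
                  refine lintegral_mono fun τ => ?_
                  refine (setLIntegral_le_lintegral _ _).trans_eq ?_
                  exact lintegral_add_right_eq_self φ _
              _ = _ := by simp
          · exact (setLIntegral_le_lintegral _ _).trans_eq (lintegral_add_right_eq_self U _)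
          · exact setLIntegral_le_lintegral _ _
      _ = _ := by ring
  have hvR : volume Ω = ENNReal.ofReal (2 ^ d) * volume (ball (0 : E d) h) := by
    rw [← vol_ball_mul (0 : E d) (0 : E d) (by norm_num) hh0, hΩ]; congr 2; rw [hh]; ring
  rw [hφ, hU, lintegral_indicator hΩm, lintegral_indicator hΩm, ← vol_mul_av _ _ hR,
    ← vol_mul_av _ _ hR, hvR] at hint
  have hcan : ENNReal.ofReal h * ENNReal.ofReal (4 / R) = 2 := by
    rw [← ENNReal.ofReal_mul hh0.le, hh]
    have : R / 2 * (4 / R) = 2 := by field_simp; norm_num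
    rw [this]; simp
  rw [← ENNReal.mul_le_mul_iff_right (a := ENNReal.ofReal h) (by simpa using hh0) (by simp),
    ← ENNReal.mul_le_mul_iff_right hv0 hvt]
  refine hint.trans_eq ?_
  rw [hB]
  generalize (∫⁻ z, ‖f z - f y‖ₑ ∂av (0 : E d) R) = X
  generalize (∫⁻ z, ‖u z‖ₑ ∂av (0 : E d) R) = Y
  generalize volume (ball (0 : E d) h) = V
  calc _ = ENNReal.ofReal h * (ENNReal.ofReal (2 ^ d) * V * X) +
        (ENNReal.ofReal h * ENNReal.ofReal (4 / R)) * (ENNReal.ofReal (2 ^ d) * V * Y) := by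
          rw [hcan]
    _ = _ := by ring

lemma hess_bound {d : ℕ} {u : E d → ℝ} {w : E d} (hu : DifferentiableAt ℝ (fderiv ℝ u) w) :
    ‖fderiv ℝ (fderiv ℝ u) w‖ ≤ frob (hess u w) := by
  set D := fderiv ℝ (fderiv ℝ u) w with hD
  have hij : ∀ i j, hess u w i j = D (EuclideanSpace.single i 1) (EuclideanSpace.single j 1) := by
    intro i j
    simp only [hess, Matrix.of_apply]
    have := (hu.hasFDerivAt.clm_apply
      (hasFDerivAt_const (EuclideanSpace.single j (1 : ℝ)) w)).fderiv
    rw [this]; simp [hD]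
  refine ContinuousLinearMap.opNorm_le_bound₂ _ (Real.sqrt_nonneg _) fun a b => ?_
  have hexp : ∀ a : E d, a = ∑ i, a i • EuclideanSpace.single i (1 : ℝ) := by
    intro a
    ext k
    simp [Finset.sum_apply, Pi.single_apply]
  have hDab : D a b = ∑ i, ∑ j, (a i * b j) * hess u w i j := by
    conv_lhs => rw [hexp a, hexp b]
    simp only [map_sum, ContinuousLinearMap.sum_apply, map_smul, ContinuousLinearMap.smul_apply,
      smul_eq_mul, hij, Finset.mul_sum]
    rw [Finset.sum_comm]
    refine Finset.sum_congr rfl fun i _ => Finset.sum_congr rfl fun j _ => by ring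
  rw [hDab, Real.norm_eq_abs, frob, EuclideanSpace.norm_eq, EuclideanSpace.norm_eq,
    ← Real.sqrt_mul (by positivity), ← Real.sqrt_mul (by positivity)]
  refine Real.abs_le_sqrt ?_
  simp only [Real.norm_eq_abs, sq_abs]
  have hprod : ∑ x ∈ (Finset.univ : Finset (Fin d)) ×ˢ (Finset.univ : Finset (Fin d)),
      (a x.1 * b x.2) ^ 2 = (∑ i, a i ^ 2) * ∑ j, b j ^ 2 := by
    rw [Finset.sum_product, Finset.sum_mul_sum]
    simp only [mul_pow]
  have hcs := Finset.sum_mul_sq_le_sq_mul_sq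
    ((Finset.univ : Finset (Fin d)) ×ˢ (Finset.univ : Finset (Fin d)))
    (fun x => a x.1 * b x.2) (fun x => hess u w x.1 x.2)
  rw [hprod, Finset.sum_product, Finset.sum_product] at hcs
  refine hcs.trans_eq ?_
  ring

lemma nLp_av {d : ℕ} {p : ℝ} (hp : 0 < p) (x : E d) (ρ : ℝ) (g : E d → ℝ) :
    nLp p (ball x ρ) g = (∫⁻ z, ‖g z‖ₑ ^ p ∂av x ρ) ^ (1 / p) := by
  rw [nLp, lintegral_av]
  congr 3
  funext z
  rw [← ENNReal.ofReal_rpow_of_nonneg (abs_nonneg _) hp.le, Real.enorm_eq_ofReal_abs]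

lemma le_morrey {d : ℕ} {p μ : ℝ} (hp : 0 < p) {Ω : Set (E d)} (g : E d → ℝ) {x : E d}
    (hx : x ∈ Ω) {ρ : ℝ} (hρ : 0 < ρ) :
    ENNReal.ofReal (ρ ^ μ) * (∫⁻ z, ‖Ω.indicator g z‖ₑ ^ p ∂av x ρ) ^ (1 / p) ≤
      morrey p μ Ω g := by
  rw [← nLp_av hp, morrey]
  exact le_iSup_of_le ρ (le_iSup_of_le hρ (le_iSup_of_le x (le_iSup_of_le hx le_rfl)))

lemma avg_le {d : ℕ} {p μ : ℝ} (hp : 1 < p) {R : ℝ} (hR : 0 < R) {g : E d → ℝ}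
    (hg : ContinuousOn g (ball (0 : E d) R)) :
    ∫⁻ z, ‖g z‖ₑ ∂av (0 : E d) R ≤
      ENNReal.ofReal (R ^ (-μ)) * morrey p μ (ball (0 : E d) R) g := by
  have hp0 : 0 < p := by linarith
  have := av_prob (0 : E d) hR
  have h1 := morrey_conv hR (le_morrey (μ := μ) hp0 g (mem_ball_self (x := (0 : E d)) hR) hR)
  refine le_trans ?_ h1
  have hm : Measurable fun z => ‖(ball (0 : E d) R).indicator g z‖ₑ := by
    have := ind_meas (Ω := ball (0 : E d) R) measurableSet_ball
      (continuous_enorm.comp_continuousOn hg)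
    convert this using 1
    funext z
    by_cases hz : z ∈ ball (0 : E d) R
    · simp [indicator_of_mem hz]
    · simp [indicator_of_notMem hz]
  refine le_trans (le_of_eq ?_) (jensen_prob _ hp hm.aemeasurable)
  rw [lintegral_av, lintegral_av]
  congr 1
  exact setLIntegral_congr_fun measurableSet_ball fun z hz => by simp only [indicator_of_mem hz]

lemma combo {d : ℕ} {p q r : ℝ} (hp : 1 < p) (hpq : p < q) (hr : r = p * q / (q - p))
    {R : ℝ} {b g : E d → ℝ} (hb : Measurable b) (hg : Measurable g) {Z : ℝ≥0∞}
    (h : ∀ x ∈ ball (0 : E d) R, ∀ ρ, 0 < ρ → ENNReal.ofReal (ρ ^ (q / p - 1)) *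
      (∫⁻ y, ‖(ball (0 : E d) R).indicator g y‖ₑ ^ r ∂av x ρ) ^ (1 / r) ≤ Z) :
    morrey p (q / p) (ball (0 : E d) R) (fun x => b x * g x) ≤
      morrey q 1 (ball (0 : E d) R) b * Z := by
  have hp0 : 0 < p := by linarith
  have hq0 : 0 < q := by linarith
  have hqp : 0 < q - p := by linarith
  have hr0 : 0 < r := by rw [hr]; positivity
  set Ω := ball (0 : E d) R with hΩ
  have hΩm : MeasurableSet Ω := measurableSet_ball
  rw [morrey]
  refine iSup_le fun ρ => iSup_le fun hρ => iSup_le fun x => iSup_le fun hx => ?_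
  rw [nLp_av hp0]
  have hH := ENNReal.lintegral_Lp_mul_le_Lq_mul_Lr (p := p) (q := q) (r := r) hp0 hpq
    (by rw [hr]; field_simp; ring) (av x ρ)
    (f := fun z => ‖Ω.indicator b z‖ₑ) (g := fun z => ‖Ω.indicator g z‖ₑ)
    (hb.indicator hΩm).enorm.aemeasurable (hg.indicator hΩm).enorm.aemeasurable
  have he : (∫⁻ z, ‖Ω.indicator (fun x => b x * g x) z‖ₑ ^ p ∂av x ρ) =
      ∫⁻ z, (((fun z => ‖Ω.indicator b z‖ₑ) * (fun z => ‖Ω.indicator g z‖ₑ)) z) ^ p ∂av x ρ := by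
    congr 1
    funext z
    by_cases hz : z ∈ Ω
    · simp [indicator_of_mem hz, enorm_mul]
    · simp [indicator_of_notMem hz]
  rw [he]
  have hsplit : ENNReal.ofReal (ρ ^ (q / p)) =
      ENNReal.ofReal (ρ ^ (1 : ℝ)) * ENNReal.ofReal (ρ ^ (q / p - 1)) := by
    rw [← ENNReal.ofReal_mul (by positivity), ← Real.rpow_add hρ]; congr 2; ring
  calc _ ≤ (ENNReal.ofReal (ρ ^ (1 : ℝ)) * ENNReal.ofReal (ρ ^ (q / p - 1))) *
        ((∫⁻ z, ‖Ω.indicator b z‖ₑ ^ q ∂av x ρ) ^ (1 / q) *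
          (∫⁻ z, ‖Ω.indicator g z‖ₑ ^ r ∂av x ρ) ^ (1 / r)) := by
        rw [hsplit]; exact mul_le_mul_right hH _
    _ = (ENNReal.ofReal (ρ ^ (1 : ℝ)) * (∫⁻ z, ‖Ω.indicator b z‖ₑ ^ q ∂av x ρ) ^ (1 / q)) *
        (ENNReal.ofReal (ρ ^ (q / p - 1)) *
          (∫⁻ z, ‖Ω.indicator g z‖ₑ ^ r ∂av x ρ) ^ (1 / r)) := by ring
    _ ≤ _ := mul_le_mul' (le_morrey hq0 b hx hρ) (h x hx ρ hρ)

lemma hess_meas {d : ℕ} (u : E d → ℝ) : Measurable fun x => frob (hess u x) := by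
  unfold frob hess
  refine Real.continuous_sqrt.measurable.comp ?_
  refine Finset.measurable_sum _ fun i _ => Finset.measurable_sum _ fun j _ => ?_
  simp only [Matrix.of_apply]
  exact (measurable_fderiv_apply_const ℝ _ _).pow_const 2

lemma pot_le {d : ℕ} {p μ : ℝ} (hp : 1 < p) (hμ : 1 < μ) {R : ℝ} (hR : 0 < R)
    {G : E d → ℝ≥0∞} (hG : Measurable G) {K : ℝ≥0∞} (hK : K ≠ ⊤) {y : E d}
    (h : ∀ ρ, 0 < ρ → (∫⁻ z, G z ^ p ∂av y ρ) ^ (1 / p) ≤ ENNReal.ofReal (ρ ^ (-μ)) * K) :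
    pot R G y ≤ ENNReal.ofReal (μ / (μ - 1)) * ENNReal.ofReal (2 ^ d) ^ (1 - 1 / μ) *
      (mx G y ^ (1 - 1 / μ) * K ^ (1 / μ)) := by
  have hμ0 : 0 < μ := by linarith
  have hc : 0 < 1 - 1 / μ := by
    rw [sub_pos, div_lt_one hμ0]; exact hμ
  have := hedberg hμ (T := 2 * R) (by positivity) hK (m := ENNReal.ofReal (2 ^ d) * mx G y)
    (H := fun t => ∫⁻ w, G w ∂av y t) (fun t ht => av_le_mx G y ht) (fun t ht => by
      have := av_prob y ht
      exact (jensen_prob _ hp hG.aemeasurable).trans (h t ht))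
  refine this.trans_eq ?_
  rw [ENNReal.mul_rpow_of_nonneg _ _ hc.le]
  ring

/-- the main estimate before applying Hölder -/
lemma core {d : ℕ} (hd : 1 ≤ d) {p q r : ℝ} (hp : 1 < p) (hpq : p < q) (hqd : q < d)
    (hr : r = p * q / (q - p)) :
    ∃ C : ℝ≥0∞, C ≠ ⊤ ∧ C ≠ 0 ∧ ∀ (R : ℝ), 0 < R → ∀ u : E d → ℝ,
      ContDiffOn ℝ 2 u (ball (0 : E d) R) →
      ∀ X : ℝ≥0∞, (X = ENNReal.ofReal R⁻¹ *
            morrey p (q / p) (ball (0 : E d) R) (fun x => ‖fderiv ℝ u x‖) ∨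
          X = ENNReal.ofReal (R ^ (-2 : ℝ)) * morrey p (q / p) (ball (0 : E d) R) u) →
      ∀ x ∈ ball (0 : E d) R, ∀ ρ, 0 < ρ → ENNReal.ofReal (ρ ^ (q / p - 1)) *
        (∫⁻ y, ‖(ball (0 : E d) R).indicator (fun x => ‖fderiv ℝ u x‖) y‖ₑ ^ r ∂av x ρ) ^ (1 / r)
        ≤ C * (morrey p (q / p) (ball (0 : E d) R) (fun x => frob (hess u x)) + X) := by
  have hp0 : 0 < p := by linarith
  set μ := q / p with hμ
  have hμ1 : 1 < μ := (one_lt_div hp0).2 hpq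
  have hμ0 : 0 < μ := by linarith
  have hc : 0 < 1 - 1 / μ := by
    rw [sub_pos, div_lt_one hμ0]; exact hμ1
  set D : ℝ≥0∞ := ENNReal.ofReal (2 ^ d) with hD
  have hDt : D ≠ ⊤ := by simp [hD]
  have hD1 : 1 ≤ D := by
    rw [hD, ← ENNReal.ofReal_one]; exact ENNReal.ofReal_le_ofReal (one_le_pow₀ (by norm_num))
  set C0 : ℝ≥0∞ := ENNReal.ofReal (μ / (μ - 1)) * D ^ (1 - 1 / μ) with hC0
  have hC0t : C0 ≠ ⊤ :=
    ENNReal.mul_ne_top (by simp) (ENNReal.rpow_ne_top_of_nonneg hc.le hDt)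
  obtain ⟨C, hCt, hC⟩ := adams hd hp hpq hqd hr (D * (D * C0))
    (ENNReal.mul_ne_top hDt (ENNReal.mul_ne_top hDt hC0t))
  refine ⟨C + 1 + D * 4, by finiteness, by simp, ?_⟩
  intro R hR u hu X hX x hx ρ hρ
  set Ω := ball (0 : E d) R with hΩ
  have hΩm : MeasurableSet Ω := measurableSet_ball
  set K := morrey p μ Ω (fun x => frob (hess u x)) with hKdef
  by_cases hK : K = ⊤
  · rw [hK, top_add, ENNReal.mul_top (by simp)]; exact le_top
  set G : E d → ℝ≥0∞ := fun z => ‖Ω.indicator (fun x => frob (hess u x)) z‖ₑ with hG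
  have hGm : Measurable G := ((hess_meas u).indicator hΩm).enorm
  have hGK : ∀ x ∈ Ω, ∀ ρ, 0 < ρ →
      (∫⁻ z, G z ^ p ∂av x ρ) ^ (1 / p) ≤ ENNReal.ofReal (ρ ^ (-μ)) * K := fun x hx ρ hρ =>
    morrey_conv hρ (le_morrey hp0 _ hx hρ)
  have hu1 : ContDiffOn ℝ 1 u Ω := hu.of_le one_le_two
  have hf1 : ContDiffOn ℝ 1 (fderiv ℝ u) Ω := hu.fderiv_of_isOpen isOpen_ball (by norm_num)
  have hfc : ContinuousOn (fderiv ℝ u) Ω := hf1.continuousOn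
  have hfG : ∀ w ∈ Ω, ‖fderiv ℝ (fderiv ℝ u) w‖ₑ ≤ G w := by
    intro w hw
    have h1 := hess_bound ((hf1.differentiableOn one_ne_zero).differentiableAt
      (isOpen_ball.mem_nhds hw))
    simp only [hG, indicator_of_mem hw]
    rw [← ofReal_norm, ← ofReal_norm]
    exact ENNReal.ofReal_le_ofReal (h1.trans (Real.le_norm_self _))
  have hosc : ∀ y ∈ Ω, ∫⁻ z, ‖fderiv ℝ u z - fderiv ℝ u y‖ₑ ∂av (0 : E d) R ≤
      D * (C0 * (mx G y ^ (1 - 1 / μ) * K ^ (1 / μ))) := fun y hy =>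
    (osc_bound hR hf1 hGm hfG hy).trans
      (mul_le_mul_right (pot_le hp hμ1 hR hGm hK (hGK y hy)) _)
  suffices hA : ∃ A : ℝ≥0∞, A * ENNReal.ofReal (R ^ (μ - 1)) ≤ (1 + D * 4) * X ∧
      ∀ y ∈ Ω, ‖fderiv ℝ u y‖ₑ ≤
        D * (D * C0) * (mx G y ^ (1 - 1 / μ) * K ^ (1 / μ)) + A by
    obtain ⟨A, hA1, hA2⟩ := hA
    refine (hC R hR G _ K A hGm hGK (fun y => ?_) x hx ρ hρ).trans ?_
    · by_cases hy : y ∈ Ω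
      · have h1 := hA2 y hy
        rw [← enorm_norm] at h1
        rw [indicator_of_mem hy, indicator_of_mem (show y ∈ ball (0 : E d) R from hy)]
        exact h1
      · simp [indicator_of_notMem hy]
    · calc _ ≤ C * K + (1 + D * 4) * X := add_le_add_right hA1 _
        _ ≤ (C + 1 + D * 4) * K + (C + 1 + D * 4) * X := by
          refine add_le_add (mul_le_mul_left ?_ _) (mul_le_mul_left ?_ _)
          · rw [add_assoc]; exact le_self_add
          · rw [add_assoc]; exact le_add_self
        _ = _ := by ring
  rcases hX with hX | hX
  · refine ⟨∫⁻ z, ‖fderiv ℝ u z‖ₑ ∂av (0 : E d) R, ?_, fun y hy => ?_⟩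
    · have h1 := avg_le (p := p) (μ := μ) hp hR (g := fun x => ‖fderiv ℝ u x‖) hfc.norm
      simp only [enorm_norm] at h1
      calc _ ≤ ENNReal.ofReal (R ^ (-μ)) * morrey p μ Ω (fun x => ‖fderiv ℝ u x‖) *
            ENNReal.ofReal (R ^ (μ - 1)) := mul_le_mul_left h1 _
        _ = X := by
          rw [hX, mul_right_comm, ← ENNReal.ofReal_mul (by positivity), ← Real.rpow_add hR,
            ← Real.rpow_neg_one]
          congr 3; ring
        _ ≤ _ := le_mul_of_one_le_left' le_self_add
    · refine (point1 hR (measurable_fderiv ℝ u).enorm y).trans (add_le_add_left ?_ _)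
      refine (hosc y hy).trans ?_
      rw [mul_assoc D (D * C0), mul_assoc D C0]
      exact le_mul_of_one_le_left' hD1
  · refine ⟨D * (ENNReal.ofReal (4 / R) * ∫⁻ z, ‖u z‖ₑ ∂av (0 : E d) R), ?_, fun y hy => ?_⟩
    · have h1 := avg_le (p := p) (μ := μ) hp hR (g := u) hu.continuousOn
      have h4 : ENNReal.ofReal (4 / R) * ENNReal.ofReal (R ^ (-μ)) * ENNReal.ofReal (R ^ (μ - 1)) =
          4 * ENNReal.ofReal (R ^ (-2 : ℝ)) := by
        rw [← ENNReal.ofReal_mul (by positivity), ← ENNReal.ofReal_mul (by positivity),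
          ← ENNReal.ofReal_ofNat 4, ← ENNReal.ofReal_mul (by positivity)]
        congr 1
        rw [div_eq_mul_inv, ← Real.rpow_neg_one, mul_assoc, mul_assoc, ← Real.rpow_add hR,
          ← Real.rpow_add hR]
        congr 2; ring
      calc _ ≤ D * (ENNReal.ofReal (4 / R) * (ENNReal.ofReal (R ^ (-μ)) * morrey p μ Ω u)) *
            ENNReal.ofReal (R ^ (μ - 1)) :=
              mul_le_mul_left (mul_le_mul_right (mul_le_mul_right h1 _) _) _
        _ = D * ((ENNReal.ofReal (4 / R) * ENNReal.ofReal (R ^ (-μ)) *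
            ENNReal.ofReal (R ^ (μ - 1))) * morrey p μ Ω u) := by ring
        _ = (D * 4) * X := by rw [h4, hX]; ring
        _ ≤ _ := mul_le_mul_left le_add_self _
    · refine (point2 hR hu1 y).trans ?_
      rw [mul_add]
      refine add_le_add_left ?_ _
      refine (mul_le_mul_right (hosc y hy) _).trans_eq ?_
      ring

/-- Corollary 4.8 of the paper: Morrey bound on the drift term `b |Du|`. -/
theorem stmt_12 (d : ℕ) (hd : 1 ≤ d) (p q : ℝ)
    (hp : 1 < p) (hpq : p < q) (hqd : q < d) :
    ∃ N : ℝ, 0 < N ∧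
      ∀ R : ℝ, 0 < R →
        ∀ b : E d → ℝ, Measurable b → (∀ x, 0 ≤ b x) →
          morrey q 1 (ball (0 : E d) R) b < ⊤ →
          ∀ u : E d → ℝ, ContDiffOn ℝ 2 u (closedBall (0 : E d) R) →
            morrey p (q / p) (ball (0 : E d) R) (fun x => b x * ‖fderiv ℝ u x‖) ≤
                ENNReal.ofReal N * morrey q 1 (ball (0 : E d) R) b *
                  (morrey p (q / p) (ball (0 : E d) R) (fun x => frob (hess u x)) +
                    ENNReal.ofReal R⁻¹ *
                      morrey p (q / p) (ball (0 : E d) R) (fun x => ‖fderiv ℝ u x‖)) ∧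
              morrey p (q / p) (ball (0 : E d) R) (fun x => b x * ‖fderiv ℝ u x‖) ≤
                ENNReal.ofReal N * morrey q 1 (ball (0 : E d) R) b *
                  (morrey p (q / p) (ball (0 : E d) R) (fun x => frob (hess u x)) +
                    ENNReal.ofReal (R ^ (-2 : ℝ)) *
                      morrey p (q / p) (ball (0 : E d) R) u) := by
  obtain ⟨C, hCt, hC0, hC⟩ := core hd hp hpq hqd rfl
  refine ⟨C.toReal, ENNReal.toReal_pos hC0 hCt, ?_⟩
  intro R hR b hb _ _ u hu
  rw [ENNReal.ofReal_toReal hCt]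
  have hu' : ContDiffOn ℝ 2 u (ball (0 : E d) R) := hu.mono ball_subset_closedBall
  have key := fun X hX => combo hp hpq rfl hb (measurable_fderiv ℝ u).norm (hC R hR u hu' X hX)
  refine ⟨(key _ (Or.inl rfl)).trans_eq ?_, (key _ (Or.inr rfl)).trans_eq ?_⟩
  · ring
  · ring
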